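/- arXiv:1410.7501 — 2 statements merged into one kernel-verified Lean document; each statement's English description precedes it below -/
import Mathlib

section
/- Let s and t be groupoid terms which have a cycle. Then s and t are separated in some finite groupoid. -/
/-- Evaluation of a groupoid term in a groupoid `⟨G, op⟩` under the assignment `f`. -/
def evalWith {α G : Type*} (op : G → G → G) (f : α → G) : FreeMagma α → G
  | .of a => f a
  | .mul s t => op (evalWith op f s) (evalWith op f t)

/-- The groupoid `⟨G, op⟩` separates the terms `s` and `t`. -/
def Separates {α G : Type*} (op : G → G → G) (s t : FreeMagma α) : Prop :=
  ∀ f : α → G, evalWith op f s ≠ evalWith op f t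

/-- The list of variable occurrences of a term, together with their paths: strings
over `{l, r}` (here `false = l`, `true = r`) read from the root. -/
def leafPaths {α : Type*} : FreeMagma α → List (α × List Bool)
  | .of a => [(a, [])]
  | .mul s t => (leafPaths s).map (fun q => (q.1, false :: q.2)) ++
      (leafPaths t).map (fun q => (q.1, true :: q.2))

/-- Given terms `s` and `t`, the variable `y` occurs above the variable `z` iff there
are occurrences `y′` of `y` and `z′` of `z` such that `path_s(y′)` is an initial
substring of `path_t(z′)`, or `path_t(y′)` is an initial substring of `path_s(z′)`. -/
def OccursAbove {α : Type*} (s t : FreeMagma α) (y z : α) : Prop :=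
  (∃ p q, (y, p) ∈ leafPaths s ∧ (z, q) ∈ leafPaths t ∧ p <+: q) ∨
  (∃ p q, (y, p) ∈ leafPaths t ∧ (z, q) ∈ leafPaths s ∧ p <+: q)

/-- `y` occurs strictly above `z`: as in `OccursAbove`, with the initial substring
proper. -/
def OccursStrictlyAbove {α : Type*} (s t : FreeMagma α) (y z : α) : Prop :=
  (∃ p q, (y, p) ∈ leafPaths s ∧ (z, q) ∈ leafPaths t ∧ p <+: q ∧ p ≠ q) ∨
  (∃ p q, (y, p) ∈ leafPaths t ∧ (z, q) ∈ leafPaths s ∧ p <+: q ∧ p ≠ q)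

/-- Terms `s` and `t` have a cycle: a sequence of variables `y₀, y₁, …, y_{m-1}`
(indices mod `m`) with each `y_i` occurring above `y_{i+1}`, and at least one
occurring strictly above the next. -/
def HaveCycle {α : Type*} (s t : FreeMagma α) : Prop :=
  ∃ m : ℕ, 1 ≤ m ∧ ∃ y : ℕ → α,
    (∀ i < m, OccursAbove s t (y i) (y ((i + 1) % m))) ∧
    (∃ i < m, OccursStrictlyAbove s t (y i) (y ((i + 1) % m)))

/-!
An element of the separating groupoid assigns a value to each binary tape, and `(a ⋆ b) σ` is one
more than the value of `a` or `b`, according to the first letter of `σ`, at the rest of `σ`. So a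
term evaluated at a tape which starts with the path `p` of an occurrence of `z` returns the value
of `z` at the remaining tape, plus `|p|`.

Suppose `s` and `t` take the same value. If `y` has path `p` in one of them and `z` has path `pu`
in the other, then evaluating at the tape `puτ` gives `y(uτ) = z(τ) + |u|`. Around a cycle these
add up to `y(Uτ) = y(τ) + |U|` with `U` nonempty, which is absurd for `τ = UUU⋯` if values are
taken modulo `|U| + 1`. Only the finitely many tapes which are `|U|`-periodic after a prefix of
bounded length play a role.
-/

section Terms

variable {α : Type*} {s t : FreeMagma α}

theorem mem_leafPaths_of {a z : α} {p : List Bool} :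
    (z, p) ∈ leafPaths (.of a) ↔ z = a ∧ p = [] := by
  simp [leafPaths]

theorem mem_leafPaths_mul {z : α} {p : List Bool} :
    (z, p) ∈ leafPaths (s * t) ↔
      ∃ c q, p = c :: q ∧ (z, q) ∈ leafPaths (cond c t s) := by
  change (z, p) ∈ leafPaths (.mul s t) ↔ _
  simp [leafPaths, eq_comm, and_comm]

theorem length_lt_of_mem_leafPaths {z : α} {p : List Bool} (h : (z, p) ∈ leafPaths t) :
    p.length < t.length := by
  induction t generalizing p with
  | ih1 a => simp [mem_leafPaths_of.mp h]
  | ih2 s t ihs iht =>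
    obtain ⟨c, q, rfl, hq⟩ := mem_leafPaths_mul.mp h
    have hs := s.length_pos
    have ht := t.length_pos
    simp only [List.length_cons, FreeMagma.length]
    cases c
    · have := ihs hq
      omega
    · have := iht hq
      omega

/-- The variable `z` lies below the variable `y` by the string `u`: some occurrence of `y` in one of
the terms `s`, `t` has a path `p` such that `p ++ u` is the path of an occurrence of `z` in the
other. This refines `OccursAbove` by recording the rest `u` of the path. -/
def LiesBelow (s t : FreeMagma α) (u : List Bool) (y z : α) : Prop :=
  ∃ p, ((y, p) ∈ leafPaths s ∧ (z, p ++ u) ∈ leafPaths t) ∨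
    ((y, p) ∈ leafPaths t ∧ (z, p ++ u) ∈ leafPaths s)

theorem OccursAbove.exists_liesBelow {y z : α} (h : OccursAbove s t y z) :
    ∃ u, LiesBelow s t u y z := by
  obtain ⟨p, _, hy, hz, u, rfl⟩ | ⟨p, _, hy, hz, u, rfl⟩ := h
  · exact ⟨u, p, .inl ⟨hy, hz⟩⟩
  · exact ⟨u, p, .inr ⟨hy, hz⟩⟩

theorem OccursStrictlyAbove.exists_liesBelow {y z : α} (h : OccursStrictlyAbove s t y z) :
    ∃ u, u ≠ [] ∧ LiesBelow s t u y z := by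
  obtain ⟨p, _, hy, hz, ⟨u, rfl⟩, hne⟩ | ⟨p, _, hy, hz, ⟨u, rfl⟩, hne⟩ := h
  · exact ⟨u, by simpa using hne, p, .inl ⟨hy, hz⟩⟩
  · exact ⟨u, by simpa using hne, p, .inr ⟨hy, hz⟩⟩

/-- `Descent s t u y z` says that some sequence of steps of `LiesBelow` leads from the variable `y`
down to the variable `z`, the strings of the steps concatenating to `u`. Going around a cycle is a
descent from a variable to itself with `u` nonempty. -/
inductive Descent (s t : FreeMagma α) : List Bool → α → α → Prop
  | nil (y : α) : Descent s t [] y y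
  | cons {u v : List Bool} {y z w : α} :
      LiesBelow s t u y z → Descent s t v z w → Descent s t (u ++ v) y w

theorem exists_descent_of_reflTransGen {y z : α}
    (h : Relation.ReflTransGen (OccursAbove s t) y z) : ∃ u, Descent s t u y z := by
  induction h using Relation.ReflTransGen.head_induction_on with
  | refl => exact ⟨[], .nil z⟩
  | head hstep _ ih =>
    obtain ⟨u, hu⟩ := hstep.exists_liesBelow
    obtain ⟨v, hv⟩ := ih
    exact ⟨u ++ v, .cons hu hv⟩

theorem HaveCycle.exists_occursStrictlyAbove (h : HaveCycle s t) :
    ∃ y z, OccursStrictlyAbove s t y z ∧ Relation.ReflTransGen (OccursAbove s t) z y := by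
  obtain ⟨m, hm, y, habove, i, hi, hstrict⟩ := h
  have hreach (k : ℕ) :
      Relation.ReflTransGen (OccursAbove s t) (y ((i + 1) % m)) (y ((i + 1 + k) % m)) := by
    induction k with
    | zero => exact .refl
    | succ k ih =>
      refine ih.tail ?_
      simpa [add_assoc] using habove ((i + 1 + k) % m) (Nat.mod_lt _ hm)
  have hround : (i + 1 + (m - 1)) % m = i := by
    rw [show i + 1 + (m - 1) = i + m by omega, Nat.add_mod_right, Nat.mod_eq_of_lt hi]
  refine ⟨y i, y ((i + 1) % m), hstrict, ?_⟩
  simpa only [hround] using hreach (m - 1)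

theorem HaveCycle.exists_descent (h : HaveCycle s t) : ∃ y u, u ≠ [] ∧ Descent s t u y y := by
  obtain ⟨y, z, hyz, hzy⟩ := h.exists_occursStrictlyAbove
  obtain ⟨u, hne, hu⟩ := hyz.exists_liesBelow
  obtain ⟨v, hv⟩ := exists_descent_of_reflTransGen hzy
  exact ⟨y, u ++ v, by simp [hne], .cons hu hv⟩

end Terms

section Streams

variable {A : Type*}

theorem mem_of_append_mem {T : Set (Stream' A)} (hT : Set.MapsTo Stream'.tail T T)
    {p : List A} {σ : Stream' A} (h : p ++ₛ σ ∈ T) : σ ∈ T := by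
  induction p with
  | nil => exact h
  | cons c p ih => exact ih (hT h)

/-- The streams over `A` which have period `n` from index `N` on; for finite `A` and `n ≠ 0` they
form a finite set closed under `tail`, which serves as the set of tapes. -/
def eventuallyPeriodic (A : Type*) (N n : ℕ) : Set (Stream' A) :=
  {σ | σ.drop (N + n) = σ.drop N}

theorem mapsTo_tail_eventuallyPeriodic (N n : ℕ) :
    Set.MapsTo Stream'.tail (eventuallyPeriodic A N n) (eventuallyPeriodic A N n) := by
  intro σ hσ
  calc σ.tail.drop (N + n) = (σ.drop (N + n)).tail := (Stream'.tail_drop _ _).symm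
    _ = (σ.drop N).tail := congrArg Stream'.tail hσ
    _ = σ.tail.drop N := Stream'.tail_drop _ _

theorem finite_eventuallyPeriodic [Finite A] (N : ℕ) {n : ℕ} (hn : 0 < n) :
    (eventuallyPeriodic A N n).Finite := by
  refine Set.Finite.of_injOn (f := fun σ (i : Fin (N + n)) => σ.get i) (Set.mapsTo_univ _ _) ?_
    Set.finite_univ
  intro σ hσ τ hτ hστ
  ext k
  induction k using Nat.strong_induction_on with
  | _ k ih =>
    obtain hk | ⟨i, rfl⟩ := (lt_or_ge k (N + n)).imp_right Nat.exists_eq_add_of_le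
    · exact congrFun hστ ⟨k, hk⟩
    · have hget {ρ : Stream' A} (hρ : ρ ∈ eventuallyPeriodic A N n) :
          ρ.get (N + n + i) = ρ.get (N + i) := by
        simpa using congrArg (Stream'.get · i) hρ
      rw [hget hσ, hget hτ, ih (N + i) (by omega)]

theorem append_mem_eventuallyPeriodic {M N n : ℕ} {p : List A} {σ : Stream' A}
    (hσ : σ ∈ eventuallyPeriodic A M n) (hp : p.length + M ≤ N) :
    p ++ₛ σ ∈ eventuallyPeriodic A N n := by
  obtain ⟨k, rfl⟩ := Nat.exists_eq_add_of_le hp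
  have hdrop (j : ℕ) : (p ++ₛ σ).drop (p.length + j) = σ.drop j := by
    rw [← Stream'.drop_drop, Stream'.drop_append_stream]
  calc (p ++ₛ σ).drop (p.length + M + k + n) = (σ.drop (M + n)).drop k := by
        rw [Stream'.drop_drop, ← hdrop]; congr 1; omega
    _ = (σ.drop M).drop k := congrArg (Stream'.drop k) hσ
    _ = (p ++ₛ σ).drop (p.length + M + k) := by
        rw [Stream'.drop_drop, add_assoc, hdrop]

theorem eventuallyPeriodic_mono {M N : ℕ} (h : M ≤ N) (n : ℕ) :
    eventuallyPeriodic A M n ⊆ eventuallyPeriodic A N n := fun _ hσ =>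
  append_mem_eventuallyPeriodic (p := []) hσ (by simpa using h)

theorem mem_eventuallyPeriodic_of_append_eq {p : List A} {σ : Stream' A} (h : p ++ₛ σ = σ) :
    σ ∈ eventuallyPeriodic A 0 p.length := by
  change σ.drop (0 + p.length) = σ
  conv_lhs => rw [zero_add, ← h, Stream'.drop_append_stream]

end Streams

section TapeGroupoid

variable {α R : Type*} [AddGroupWithOne R] {T : Set (Stream' Bool)}

/-- The groupoid operation on `R`-valued functions of the tapes in `T`: the first letter of a tape
selects one of the factors (`false` the left one, `true` the right one), which is evaluated at the
tail of the tape; the summand `1` makes evaluation count the letters read. -/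
def tapeMul (hT : Set.MapsTo Stream'.tail T T) (a b : T → R) (σ : T) : R :=
  cond σ.1.head b a (hT.restrict _ _ _ σ) + 1

theorem evalWith_tapeMul_append (hT : Set.MapsTo Stream'.tail T T) (f : α → T → R)
    {t : FreeMagma α} {z : α} {p : List Bool} (hz : (z, p) ∈ leafPaths t) {σ : Stream' Bool}
    (h : p ++ₛ σ ∈ T) :
    evalWith (tapeMul hT) f t ⟨p ++ₛ σ, h⟩ = f z ⟨σ, mem_of_append_mem hT h⟩ + p.length := by
  induction t generalizing p with
  | ih1 a =>
    obtain ⟨rfl, rfl⟩ := mem_leafPaths_of.mp hz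
    simp [evalWith]
  | ih2 s t ihs iht =>
    obtain ⟨c, q, rfl, hq⟩ := mem_leafPaths_mul.mp hz
    have hread : evalWith (tapeMul hT) f (s * t) ⟨c :: q ++ₛ σ, h⟩ =
        evalWith (tapeMul hT) f (cond c t s) ⟨q ++ₛ σ, hT h⟩ + 1 := by
      cases c <;> rfl
    have hrest : evalWith (tapeMul hT) f (cond c t s) ⟨q ++ₛ σ, hT h⟩ =
        f z ⟨σ, mem_of_append_mem hT h⟩ + q.length := by
      cases c
      · exact ihs hq (hT h)
      · exact iht hq (hT h)
    rw [hread, hrest, List.length_cons, Nat.cast_add_one, add_assoc]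

theorem apply_append_of_evalWith_eq (hT : Set.MapsTo Stream'.tail T T) {f : α → T → R}
    {s t : FreeMagma α} (hf : evalWith (tapeMul hT) f s = evalWith (tapeMul hT) f t)
    {y z : α} {p u : List Bool} (hy : (y, p) ∈ leafPaths s) (hz : (z, p ++ u) ∈ leafPaths t)
    {σ : Stream' Bool} (h : p ++ₛ (u ++ₛ σ) ∈ T) :
    f y ⟨u ++ₛ σ, mem_of_append_mem hT h⟩ =
      f z ⟨σ, mem_of_append_mem hT (mem_of_append_mem hT h)⟩ + u.length := by
  have h' : p ++ u ++ₛ σ ∈ T := by rwa [Stream'.append_append_stream]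
  refine add_right_cancel (b := (p.length : R)) ?_
  calc f y ⟨u ++ₛ σ, _⟩ + p.length
      = evalWith (tapeMul hT) f s ⟨p ++ₛ (u ++ₛ σ), h⟩ :=
        (evalWith_tapeMul_append hT f hy h).symm
    _ = evalWith (tapeMul hT) f t ⟨p ++ u ++ₛ σ, h'⟩ := by
        simp only [hf, Stream'.append_append_stream]
    _ = f z ⟨σ, _⟩ + (p ++ u).length := evalWith_tapeMul_append hT f hz h'
    _ = f z ⟨σ, _⟩ + u.length + p.length := by
        rw [List.length_append, Nat.add_comm, Nat.cast_add, add_assoc]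

variable {s t : FreeMagma α} {N n : ℕ} {u : List Bool} {y z : α}

theorem LiesBelow.apply_append (hs : s.length ≤ N) (ht : t.length ≤ N)
    {f : α → eventuallyPeriodic Bool N n → R}
    (hf : evalWith (tapeMul (mapsTo_tail_eventuallyPeriodic N n)) f s =
      evalWith (tapeMul (mapsTo_tail_eventuallyPeriodic N n)) f t)
    (hyz : LiesBelow s t u y z) {σ : Stream' Bool} (h : u ++ₛ σ ∈ eventuallyPeriodic Bool 0 n)
    (hσ : σ ∈ eventuallyPeriodic Bool 0 n) :
    f y ⟨u ++ₛ σ, eventuallyPeriodic_mono N.zero_le n h⟩ =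
      f z ⟨σ, eventuallyPeriodic_mono N.zero_le n hσ⟩ + u.length := by
  obtain ⟨p, ⟨hy, hz⟩ | ⟨hy, hz⟩⟩ := hyz
  · have hp : p.length ≤ N := (length_lt_of_mem_leafPaths hy).le.trans hs
    exact apply_append_of_evalWith_eq _ hf hy hz (append_mem_eventuallyPeriodic h hp)
  · have hp : p.length ≤ N := (length_lt_of_mem_leafPaths hy).le.trans ht
    exact apply_append_of_evalWith_eq _ hf.symm hy hz (append_mem_eventuallyPeriodic h hp)

theorem Descent.apply_append (hs : s.length ≤ N) (ht : t.length ≤ N)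
    {f : α → eventuallyPeriodic Bool N n → R}
    (hf : evalWith (tapeMul (mapsTo_tail_eventuallyPeriodic N n)) f s =
      evalWith (tapeMul (mapsTo_tail_eventuallyPeriodic N n)) f t)
    (hyz : Descent s t u y z) {σ : Stream' Bool} (h : u ++ₛ σ ∈ eventuallyPeriodic Bool 0 n)
    (hσ : σ ∈ eventuallyPeriodic Bool 0 n) :
    f y ⟨u ++ₛ σ, eventuallyPeriodic_mono N.zero_le n h⟩ =
      f z ⟨σ, eventuallyPeriodic_mono N.zero_le n hσ⟩ + u.length := by
  induction hyz with
  | nil y => simp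
  | @cons u v y z w hstep _ ih =>
    simp only [Stream'.append_append_stream] at h ⊢
    have hv : v ++ₛ σ ∈ eventuallyPeriodic Bool 0 n :=
      mem_of_append_mem (mapsTo_tail_eventuallyPeriodic 0 n) h
    rw [hstep.apply_append hs ht hf h hv, ih hv, List.length_append, Nat.add_comm u.length,
      Nat.cast_add, add_assoc]

theorem Descent.separates_tapeMul (hs : s.length ≤ N) (ht : t.length ≤ N)
    (hy : Descent s t u y y) (hu : (u.length : R) ≠ 0) :
    Separates (tapeMul (R := R) (mapsTo_tail_eventuallyPeriodic N u.length)) s t := by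
  intro f hf
  have hne : u ≠ [] := by rintro rfl; simp at hu
  have hcycle : u ++ₛ Stream'.cycle u hne = Stream'.cycle u hne := (Stream'.cycle_eq u hne).symm
  have hper := mem_eventuallyPeriodic_of_append_eq hcycle
  have hround := hy.apply_append hs ht hf (by rwa [hcycle]) hper
  simp only [hcycle] at hround
  exact hu (left_eq_add.mp hround)

end TapeGroupoid

/-- If the groupoid terms `s` and `t` have a cycle, then `s` and `t` are
separated in some finite groupoid. -/
theorem cycle_implies_finitely_separated {α : Type*} (s t : FreeMagma α)
    (hcyc : HaveCycle s t) :
    ∃ (G : Type) (op : G → G → G), Finite G ∧ Separates op s t := by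
  obtain ⟨y, u, hu, hy⟩ := hcyc.exists_descent
  have hpos : 0 < u.length := List.length_pos_iff.mpr hu
  have hcast : (u.length : ZMod (u.length + 1)) ≠ 0 := by
    rw [Ne, ZMod.natCast_eq_zero_iff]
    exact Nat.not_dvd_of_pos_of_lt hpos u.length.lt_succ_self
  let N := max s.length t.length
  have : Finite (eventuallyPeriodic Bool N u.length) := finite_eventuallyPeriodic N hpos
  exact ⟨eventuallyPeriodic Bool N u.length → ZMod (u.length + 1),
    tapeMul (mapsTo_tail_eventuallyPeriodic N u.length), inferInstance,
    hy.separates_tapeMul (le_max_left _ _) (le_max_right _ _) hcast⟩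
end

section
/- The groupoid terms s = (x ⋆ y) ⋆ (z ⋆ y) and t = z ⋆ ((y ⋆ y) ⋆ (x ⋆ x)) cannot be unified: there are no elements f_x, f_y, f_z of the free magma on one generator such that substituting f_x, f_y, f_z for x, y, z makes s and t equal, i.e., (f_x ⋆ f_y) ⋆ (f_z ⋆ f_y) ≠ f_z ⋆ ((f_y ⋆ f_y) ⋆ (f_x ⋆ f_x)) for all such f_x, f_y, f_z. -/
theorem freeMagma_mul_injective2 {α : Type*} :
    Function.Injective2 (fun a b : FreeMagma α => a * b) := by
  rintro _ _ _ _ ⟨⟩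
  exact ⟨rfl, rfl⟩

theorem freeMagma_mul_ne_left {α : Type*} (a b : FreeMagma α) : a * b ≠ a := by
  intro h
  have length_eq : a.length + b.length = a.length := congrArg FreeMagma.length h
  exact b.length_pos.ne' (Nat.add_eq_left.mp length_eq)

theorem not_unifiable_general {M : Type*} [Mul M]
    (mul_inj : Function.Injective2 (fun a b : M => a * b))
    (not_idem : ∀ a : M, ¬ IsIdempotentElem a) (x y z : M) :
    (x * y) * (z * y) ≠ z * ((y * y) * (x * x)) := by
  intro h
  obtain ⟨hxy : x * y = z, hzy : z * y = (y * y) * (x * x)⟩ := mul_inj h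
  obtain ⟨hz : z = y * y, hy : y = x * x⟩ := mul_inj hzy
  have x_eq_y : x = y := (mul_inj (hxy.trans hz)).1
  subst x_eq_y
  exact not_idem x hy.symm

/-- The groupoid terms `s = (x ⋆ y) ⋆ (z ⋆ y)` and
`t = z ⋆ ((y ⋆ y) ⋆ (x ⋆ x))` cannot be unified: there are no elements
`f_x, f_y, f_z` of the free magma on one generator with
`(f_x ⋆ f_y) ⋆ (f_z ⋆ f_y) = f_z ⋆ ((f_y ⋆ f_y) ⋆ (f_x ⋆ f_x))`. -/
theorem not_unifiable :
    ∀ fx fy fz : FreeMagma Unit,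
      (fx * fy) * (fz * fy) ≠ fz * ((fy * fy) * (fx * fx)) :=
  not_unifiable_general freeMagma_mul_injective2 fun a => freeMagma_mul_ne_left a a
end
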